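/- Let T = {(−1,1), (0,1), (1,−1)} ⊂ ℤ². Let cₙ be the number of quarter-plane walks of length n with steps T. Let t be real with 0 < t < 1/3, and define X₊(u) = u((1−tu) − √((1−tu)² − 4t²))/(2t) and Y₊(u) = u(1 − √(1 − 4t²(1+u)))/(2t(1+u)). Define sequences A and B by A₀ = 1, A_{2k+1} = Y₊(A_{2k}), A_{2k+2} = X₊(A_{2k+1}), and B₀ = 1, B_{2k+1} = X₊(B_{2k}), B_{2k+2} = Y₊(B_{2k+1}). Then the series ∑_{n≥0} cₙ tⁿ, ∑_{n≥0} (−1)ⁿ AₙA_{n+1} and ∑_{n≥0} (−1)ⁿ BₙB_{n+1} converge, and ∑_{n≥0} cₙ tⁿ = (1 − ∑_{n≥0} (−1)ⁿ AₙA_{n+1} − ∑_{n≥0} (−1)ⁿ BₙB_{n+1})/(1 − 3t). -/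

import Mathlib

/-- The step set T = {(−1,1), (0,1), (1,−1)}. -/
def stepsT : Set (ℤ × ℤ) := {(-1, 1), (0, 1), (1, -1)}

/-- A quarter-plane walk of length `n` with steps from `S`. -/
def IsQuarterWalk (S : Set (ℤ × ℤ)) (n : ℕ) (p : Fin (n + 1) → ℤ × ℤ) : Prop :=
  p 0 = (0, 0) ∧
  (∀ k : Fin n, p k.succ - p k.castSucc ∈ S) ∧
  (∀ k : Fin (n + 1), 0 ≤ (p k).1 ∧ 0 ≤ (p k).2)

/-- The number of quarter-plane walks of length `n` with steps `T`. -/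
noncomputable def numWalksT (n : ℕ) : ℕ :=
  Nat.card {p : Fin (n + 1) → ℤ × ℤ // IsQuarterWalk stepsT n p}

/-!
Write `F(x, y)` for the generating function of the walks by length and endpoint and
`K(x, y) = xy - t(xy² + x² + y²)` for the kernel. Removing the last step of a walk gives
`K(x, y) F(x, y) = xy - H(x) - G(y)` with `H(x) = t x² F(x, 0)` and `G(y) = t y² F(0, y)`, so that
`H(x) + G(y) = xy` at every zero of `K` in the closed unit bidisc. Consecutive terms of `A` and `B`
are such zeros, because `A` and `B` alternate between the two small roots of `K`; hence
`∑ (-1)ⁿ AₙAₙ₊₁` and `∑ (-1)ⁿ BₙBₙ₊₁` telescope, to `H(1)` and `G(1)`. The boundary terms tend to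
zero because both roots contract by the factor `2|t| / (1 - |t|) < 1`. The kernel equation at
`(1, 1)`, where `K(1, 1) = 1 - 3t`, then gives the theorem.
-/

/-- The quarter-plane walks of length `n` with steps in `S`, as a type. -/
abbrev QuarterWalk (S : Set (ℤ × ℤ)) (n : ℕ) :=
  {p : Fin (n + 1) → ℤ × ℤ // IsQuarterWalk S n p}

theorem isQuarterWalk_snoc {S : Set (ℤ × ℤ)} {n : ℕ} {p : Fin (n + 1) → ℤ × ℤ} {v : ℤ × ℤ} :
    IsQuarterWalk S (n + 1) (Fin.snoc (α := fun _ => ℤ × ℤ) p v) ↔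
      IsQuarterWalk S n p ∧ v - p (Fin.last n) ∈ S ∧ 0 ≤ v := by
  have snoc_zero : Fin.snoc (α := fun _ => ℤ × ℤ) p v 0 = p 0 :=
    Fin.snoc_castSucc (α := fun _ => ℤ × ℤ) v p 0
  simp only [IsQuarterWalk, Fin.forall_fin_succ' (n := n), Fin.forall_fin_succ' (n := n + 1),
    Fin.succ_castSucc, Fin.succ_last, Fin.snoc_castSucc, Fin.snoc_last, snoc_zero, Prod.le_def,
    Prod.fst_zero, Prod.snd_zero]
  tauto

namespace QuarterWalk

variable {S : Set (ℤ × ℤ)} {n : ℕ}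

/-- The last point of a walk. -/
def endpoint (p : QuarterWalk S n) : ℤ × ℤ := p.1 (Fin.last n)

theorem endpoint_nonneg (p : QuarterWalk S n) : 0 ≤ p.endpoint := p.2.2.2 _

/-- The step sequence of a walk. -/
def steps (p : QuarterWalk S n) (k : Fin n) : S := ⟨p.1 k.succ - p.1 k.castSucc, p.2.2.1 k⟩

theorem steps_injective : Function.Injective (steps : QuarterWalk S n → Fin n → S) := by
  intro p q h
  refine Subtype.ext (funext fun k => ?_)
  induction k using Fin.induction with
  | zero => rw [p.2.1, q.2.1]
  | succ k ih =>
    have hk : p.1 k.succ - p.1 k.castSucc = q.1 k.succ - q.1 k.castSucc :=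
      congrArg Subtype.val (congrFun h k)
    rwa [ih, sub_left_inj] at hk

instance [Finite S] : Finite (QuarterWalk S n) := Finite.of_injective _ steps_injective

noncomputable instance [Finite S] : Fintype (QuarterWalk S n) := Fintype.ofFinite _

theorem card_le_pow [Finite S] : Nat.card (QuarterWalk S n) ≤ S.ncard ^ n :=
  calc Nat.card (QuarterWalk S n)
      ≤ Nat.card (Fin n → S) := Nat.card_le_card_of_injective _ steps_injective
    _ = S.ncard ^ n := by rw [Nat.card_fun, Nat.card_fin, Nat.card_coe_set_eq]

instance : Unique (QuarterWalk S 0) where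
  default := ⟨fun _ => 0, rfl, fun k => k.elim0, fun _ => ⟨le_rfl, le_rfl⟩⟩
  uniq p := Subtype.ext <| funext fun k => by rw [Fin.fin_one_eq_zero k]; exact p.2.1

theorem sum_endpoint_succ {M : Type*} [AddCommMonoid M] [Fintype S] (f : ℤ × ℤ → M) :
    ∑ p : QuarterWalk S (n + 1), f p.endpoint =
      ∑ p : QuarterWalk S n, ∑ s ∈ S.toFinset with 0 ≤ p.endpoint + s, f (p.endpoint + s) := by
  have walk_init (p : QuarterWalk S (n + 1)) :
      IsQuarterWalk S n (Fin.init p.1) ∧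
        p.endpoint - Fin.init (α := fun _ => ℤ × ℤ) p.1 (Fin.last n) ∈ S ∧ 0 ≤ p.endpoint := by
    rw [← isQuarterWalk_snoc, endpoint, Fin.snoc_init_self]
    exact p.2
  have walk_snoc (x : Σ _ : QuarterWalk S n, ℤ × ℤ)
      (hx : x ∈ Finset.univ.sigma fun p => {s ∈ S.toFinset | 0 ≤ p.endpoint + s}) :
      IsQuarterWalk S (n + 1) (Fin.snoc x.1.1 (x.1.endpoint + x.2)) := by
    simp only [Finset.mem_sigma, Finset.mem_filter, Set.mem_toFinset] at hx
    exact isQuarterWalk_snoc.2 ⟨x.1.2, by simpa [endpoint] using hx.2⟩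
  rw [Finset.sum_sigma']
  refine Finset.sum_bij' (fun p _ => ⟨⟨Fin.init p.1, (walk_init p).1⟩,
      p.endpoint - Fin.init (α := fun _ => ℤ × ℤ) p.1 (Fin.last n)⟩)
    (fun x hx => ⟨_, walk_snoc x hx⟩) ?_ ?_ ?_ ?_ ?_
  · intro p _
    refine Finset.mem_sigma.2 ⟨Finset.mem_univ _, Finset.mem_filter.2 ⟨?_, ?_⟩⟩
    · exact Set.mem_toFinset.2 (walk_init p).2.1
    · simpa [endpoint, Fin.init] using (walk_init p).2.2
  · simp
  · simp [endpoint]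
  · simp [endpoint]
  · simp [endpoint]

end QuarterWalk

/-- The monomial `x ^ i * y ^ j` attached to a point `(i, j)` of the quadrant; elsewhere negative
coordinates are replaced by `0`. -/
def quadrantMonomial {R : Type*} [CommSemiring R] (x y : R) (v : ℤ × ℤ) : R :=
  x ^ v.1.toNat * y ^ v.2.toNat

theorem quadrantMonomial_one_one {R : Type*} [CommSemiring R] (v : ℤ × ℤ) :
    quadrantMonomial (1 : R) 1 v = 1 := by
  simp [quadrantMonomial]

theorem norm_quadrantMonomial_le_one {𝕜 : Type*} [NormedField 𝕜] {x y : 𝕜} (hx : ‖x‖ ≤ 1)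
    (hy : ‖y‖ ≤ 1) (v : ℤ × ℤ) : ‖quadrantMonomial x y v‖ ≤ 1 := by
  rw [quadrantMonomial, norm_mul, norm_pow, norm_pow]
  exact mul_le_one₀ (pow_le_one₀ (norm_nonneg x) hx) (by positivity)
    (pow_le_one₀ (norm_nonneg y) hy)

/-- The polynomial in `x` and `y` that counts the quarter-plane walks of length `n` with steps in
`S` by the coordinates of their endpoint. -/
noncomputable def walkPoly {R : Type*} [CommSemiring R] (S : Set (ℤ × ℤ)) [Finite S] (n : ℕ)
    (x y : R) : R :=
  ∑ p : QuarterWalk S n, quadrantMonomial x y p.endpoint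

section walkPoly

variable (S : Set (ℤ × ℤ)) [Finite S]

theorem walkPoly_zero {R : Type*} [CommSemiring R] (x y : R) : walkPoly S 0 x y = 1 := by
  have endpoint_default : (default : QuarterWalk S 0).endpoint = 0 := rfl
  simp [walkPoly, endpoint_default, quadrantMonomial]

theorem walkPoly_one_one {R : Type*} [CommSemiring R] (n : ℕ) :
    walkPoly S n (1 : R) 1 = Nat.card (QuarterWalk S n) := by
  simp [walkPoly, quadrantMonomial_one_one]

theorem norm_walkPoly_le {𝕜 : Type*} [NormedField 𝕜] {x y : 𝕜} (hx : ‖x‖ ≤ 1) (hy : ‖y‖ ≤ 1)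
    (n : ℕ) : ‖walkPoly S n x y‖ ≤ (S.ncard : ℝ) ^ n :=
  calc ‖walkPoly S n x y‖
      ≤ ∑ p : QuarterWalk S n, ‖quadrantMonomial x y p.endpoint‖ := norm_sum_le _ _
    _ ≤ ∑ _p : QuarterWalk S n, 1 :=
        Finset.sum_le_sum fun p _ => norm_quadrantMonomial_le_one hx hy p.endpoint
    _ = (Nat.card (QuarterWalk S n) : ℝ) := by simp
    _ ≤ (S.ncard : ℝ) ^ n := mod_cast QuarterWalk.card_le_pow

end walkPoly

/-- The generating function `∑ₙ walkPoly S n x y * t ^ n` of the quarter-plane walks with steps in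
`S`, counted by length and endpoint. -/
noncomputable def walkGF {𝕜 : Type*} [NormedField 𝕜] (S : Set (ℤ × ℤ)) [Finite S] (t x y : 𝕜) : 𝕜 :=
  ∑' n, walkPoly S n x y * t ^ n

section walkGF

variable {𝕜 : Type*} [NormedField 𝕜] {S : Set (ℤ × ℤ)} [Finite S] {t x y : 𝕜}

theorem norm_walkPoly_mul_pow_le (hx : ‖x‖ ≤ 1) (hy : ‖y‖ ≤ 1) (n : ℕ) :
    ‖walkPoly S n x y * t ^ n‖ ≤ (S.ncard * ‖t‖) ^ n := by
  rw [norm_mul, norm_pow, mul_pow]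
  gcongr
  exact norm_walkPoly_le S hx hy n

theorem hasSum_walkGF [CompleteSpace 𝕜] (ht : S.ncard * ‖t‖ < 1) (hx : ‖x‖ ≤ 1)
    (hy : ‖y‖ ≤ 1) : HasSum (fun n => walkPoly S n x y * t ^ n) (walkGF S t x y) :=
  (Summable.of_norm_bounded (summable_geometric_of_lt_one (by positivity) ht)
    (norm_walkPoly_mul_pow_le hx hy)).hasSum

theorem norm_walkGF_le (ht : S.ncard * ‖t‖ < 1) (hx : ‖x‖ ≤ 1) (hy : ‖y‖ ≤ 1) :
    ‖walkGF S t x y‖ ≤ (1 - S.ncard * ‖t‖)⁻¹ :=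
  tsum_of_norm_bounded (hasSum_geometric_of_lt_one (by positivity) ht)
    (norm_walkPoly_mul_pow_le hx hy)

end walkGF

instance : Fintype stepsT :=
  inferInstanceAs (Fintype ({(-1, 1), (0, 1), (1, -1)} : Set (ℤ × ℤ)))

theorem toFinset_stepsT : stepsT.toFinset = {(-1, 1), (0, 1), (1, -1)} := rfl

theorem ncard_stepsT : stepsT.ncard = 3 := by
  rw [Set.ncard_eq_toFinset_card', toFinset_stepsT]
  rfl

-- The subtracted monomials belong to the steps that leave the quadrant: `(-1, 1)` from the
-- axis `i = 0` and `(1, -1)` from the axis `j = 0`.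
theorem sum_quadrantMonomial_add_stepsT {R : Type*} [CommRing R] (x y : R) {v : ℤ × ℤ}
    (hv : 0 ≤ v) :
    x * y * ∑ s ∈ stepsT.toFinset with 0 ≤ v + s, quadrantMonomial x y (v + s) =
      (x * y ^ 2 + x ^ 2 + y ^ 2) * quadrantMonomial x y v
        - x ^ 2 * quadrantMonomial x 0 v - y ^ 2 * quadrantMonomial 0 y v := by
  obtain ⟨i, j⟩ := v
  obtain ⟨hi, hj⟩ : 0 ≤ i ∧ 0 ≤ j := hv
  lift i to ℕ using hi
  lift j to ℕ using hj
  have succ_nonneg (m : ℕ) : 0 ≤ (m : ℤ) + 1 := by positivity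
  have left_step : x * (if 0 ≤ ((i : ℤ), (j : ℤ)) + (-1, 1) then
      quadrantMonomial x y (((i : ℤ), (j : ℤ)) + (-1, 1)) else 0) =
        y * (quadrantMonomial x y (i, j) - quadrantMonomial 0 y (i, j)) := by
    rcases i with _ | i <;> simp [quadrantMonomial, Prod.le_def, succ_nonneg, pow_succ', mul_assoc,
      mul_left_comm]
  have up_step : (if 0 ≤ ((i : ℤ), (j : ℤ)) + (0, 1) then
      quadrantMonomial x y (((i : ℤ), (j : ℤ)) + (0, 1)) else 0) =
        y * quadrantMonomial x y (i, j) := by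
    simp [quadrantMonomial, Prod.le_def, succ_nonneg, pow_succ', mul_left_comm]
  have down_step : y * (if 0 ≤ ((i : ℤ), (j : ℤ)) + (1, -1) then
      quadrantMonomial x y (((i : ℤ), (j : ℤ)) + (1, -1)) else 0) =
        x * (quadrantMonomial x y (i, j) - quadrantMonomial x 0 (i, j)) := by
    rcases j with _ | j <;> simp [quadrantMonomial, Prod.le_def, succ_nonneg, pow_succ', mul_assoc,
      mul_left_comm]
  rw [toFinset_stepsT, Finset.sum_filter, Finset.sum_insert (by simp),
    Finset.sum_insert (by simp), Finset.sum_singleton]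
  linear_combination y * left_step + x * y * up_step + x * down_step

theorem walkPoly_stepsT_succ {R : Type*} [CommRing R] (n : ℕ) (x y : R) :
    x * y * walkPoly stepsT (n + 1) x y =
      (x * y ^ 2 + x ^ 2 + y ^ 2) * walkPoly stepsT n x y
        - x ^ 2 * walkPoly stepsT n x 0 - y ^ 2 * walkPoly stepsT n 0 y := by
  rw [walkPoly, QuarterWalk.sum_endpoint_succ, Finset.mul_sum, Finset.sum_congr rfl fun p _ =>
    sum_quadrantMonomial_add_stepsT x y p.endpoint_nonneg]
  simp only [walkPoly, Finset.mul_sum, Finset.sum_sub_distrib]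

/-- The kernel `K(x, y) = xy - t(xy² + x² + y²)` of the step set `T`. -/
def kernelT {R : Type*} [CommRing R] (t x y : R) : R := x * y - t * (x * y ^ 2 + x ^ 2 + y ^ 2)

/-- The boundary term `t x² F(x, 0)` of the kernel equation of `T`. -/
noncomputable def xBoundary {𝕜 : Type*} [NormedField 𝕜] (t x : 𝕜) : 𝕜 :=
  t * x ^ 2 * walkGF stepsT t x 0

/-- The boundary term `t y² F(0, y)` of the kernel equation of `T`. -/
noncomputable def yBoundary {𝕜 : Type*} [NormedField 𝕜] (t y : 𝕜) : 𝕜 :=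
  t * y ^ 2 * walkGF stepsT t 0 y

section kernelEquation

variable {𝕜 : Type*} [NormedField 𝕜] {t x y : 𝕜}

theorem ncard_stepsT_mul_norm_lt_one (ht : ‖t‖ < 1 / 3) : stepsT.ncard * ‖t‖ < 1 := by
  rw [ncard_stepsT]
  push_cast
  linarith

theorem kernelT_mul_walkGF [CompleteSpace 𝕜] (ht : ‖t‖ < 1 / 3) (hx : ‖x‖ ≤ 1) (hy : ‖y‖ ≤ 1) :
    kernelT t x y * walkGF stepsT t x y = x * y - xBoundary t x - yBoundary t y := by
  have ht' := ncard_stepsT_mul_norm_lt_one ht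
  have hF := hasSum_walkGF ht' hx hy
  have hFx := hasSum_walkGF ht' hx (y := 0) (by simp)
  have hFy := hasSum_walkGF ht' (x := 0) (by simp) hy
  have hF_succ : HasSum (fun n => walkPoly stepsT (n + 1) x y * t ^ (n + 1))
      (walkGF stepsT t x y - 1) := by
    simpa [walkPoly_zero] using (hasSum_nat_add_iff' 1).2 hF
  have hF_rec : HasSum (fun n => x * y * (walkPoly stepsT (n + 1) x y * t ^ (n + 1)))
      (t * (x * y ^ 2 + x ^ 2 + y ^ 2) * walkGF stepsT t x y
        - xBoundary t x - yBoundary t y) := by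
    refine (((hF.mul_left _).sub (hFx.mul_left _)).sub (hFy.mul_left _)).congr_fun fun n => ?_
    linear_combination t ^ (n + 1) * walkPoly_stepsT_succ n x y
  rw [kernelT]
  linear_combination (hF_succ.mul_left (x * y)).unique hF_rec

theorem xBoundary_add_yBoundary [CompleteSpace 𝕜] (ht : ‖t‖ < 1 / 3) (hx : ‖x‖ ≤ 1)
    (hy : ‖y‖ ≤ 1) (hK : kernelT t x y = 0) : xBoundary t x + yBoundary t y = x * y := by
  linear_combination kernelT_mul_walkGF ht hx hy - walkGF stepsT t x y * hK

theorem norm_mul_sq_mul_le {u F : 𝕜} {C : ℝ} (hu : ‖u‖ ≤ 1) (hF : ‖F‖ ≤ C) :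
    ‖t * u ^ 2 * F‖ ≤ ‖t‖ * C * ‖u‖ := by
  calc ‖t * u ^ 2 * F‖ = ‖t‖ * ‖F‖ * ‖u‖ ^ 2 := by rw [norm_mul, norm_mul, norm_pow]; ring
    _ ≤ ‖t‖ * C * ‖u‖ :=
        mul_le_mul (by gcongr) (pow_le_of_le_one (norm_nonneg u) hu two_ne_zero) (by positivity)
          (mul_nonneg (norm_nonneg t) ((norm_nonneg F).trans hF))

theorem norm_xBoundary_le (ht : ‖t‖ < 1 / 3) (hx : ‖x‖ ≤ 1) :
    ‖xBoundary t x‖ ≤ ‖t‖ * (1 - stepsT.ncard * ‖t‖)⁻¹ * ‖x‖ :=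
  norm_mul_sq_mul_le hx (norm_walkGF_le (ncard_stepsT_mul_norm_lt_one ht) hx (by simp))

theorem norm_yBoundary_le (ht : ‖t‖ < 1 / 3) (hy : ‖y‖ ≤ 1) :
    ‖yBoundary t y‖ ≤ ‖t‖ * (1 - stepsT.ncard * ‖t‖)⁻¹ * ‖y‖ :=
  norm_mul_sq_mul_le hy (norm_walkGF_le (ncard_stepsT_mul_norm_lt_one ht) (by simp) hy)

end kernelEquation

/-- `a` is the sequence of alternating compositions `a 0`, `f (a 0)`, `g (f (a 0))`, … -/
def IsAlternatingOrbit {α : Type*} (f g : α → α) (a : ℕ → α) : Prop :=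
  ∀ k, a (2 * k + 1) = f (a (2 * k)) ∧ a (2 * k + 2) = g (a (2 * k + 1))

namespace IsAlternatingOrbit

theorem succ_eq_or {α : Type*} {f g : α → α} {a : ℕ → α} (ha : IsAlternatingOrbit f g a) (n : ℕ) :
    a (n + 1) = f (a n) ∨ a (n + 1) = g (a n) := by
  rcases Nat.even_or_odd' n with ⟨k, rfl | rfl⟩
  · exact Or.inl (ha k).1
  · exact Or.inr (ha k).2

theorem mem {α : Type*} {f g : α → α} {a : ℕ → α} {D : Set α} (ha : IsAlternatingOrbit f g a)
    (hf : Set.MapsTo f D D) (hg : Set.MapsTo g D D) (ha0 : a 0 ∈ D) (n : ℕ) : a n ∈ D := by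
  induction n with
  | zero => exact ha0
  | succ n ih => rcases ha.succ_eq_or n with h | h <;> rw [h]; exacts [hf ih, hg ih]

theorem norm_le_pow_mul {E : Type*} [Norm E] {f g : E → E} {a : ℕ → E} {q : ℝ}
    (ha : IsAlternatingOrbit f g a) (hq : 0 ≤ q) (hf : ∀ n, ‖f (a n)‖ ≤ q * ‖a n‖)
    (hg : ∀ n, ‖g (a n)‖ ≤ q * ‖a n‖) (n : ℕ) : ‖a n‖ ≤ q ^ n * ‖a 0‖ := by
  induction n with
  | zero => simp
  | succ n ih =>
    calc ‖a (n + 1)‖ ≤ q * ‖a n‖ := by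
          rcases ha.succ_eq_or n with h | h <;> rw [h]; exacts [hf n, hg n]
      _ ≤ q * (q ^ n * ‖a 0‖) := by gcongr
      _ = q ^ (n + 1) * ‖a 0‖ := by ring

-- The even terms of the series sum to `∑ H (a (2k)) + ∑ G (a (2k + 1))`, and the odd ones to
-- the negative of the same quantity without its first term `H (a 0)`.
theorem hasSum_alternating_mul_succ {𝕜 : Type*} [NormedField 𝕜] [CompleteSpace 𝕜]
    {f g H G : 𝕜 → 𝕜} {a : ℕ → 𝕜} {D : Set 𝕜} {q C : ℝ} (ha : IsAlternatingOrbit f g a)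
    (ha0 : a 0 ∈ D) (hq0 : 0 ≤ q) (hq1 : q < 1)
    (hf : Set.MapsTo f D D) (hf_le : ∀ u ∈ D, ‖f u‖ ≤ q * ‖u‖)
    (hg : Set.MapsTo g D D) (hg_le : ∀ u ∈ D, ‖g u‖ ≤ q * ‖u‖)
    (hH : ∀ u ∈ D, ‖H u‖ ≤ C * ‖u‖) (hG : ∀ u ∈ D, ‖G u‖ ≤ C * ‖u‖)
    (hHG : ∀ u ∈ D, H u + G (f u) = u * f u) (hGH : ∀ u ∈ D, G u + H (g u) = u * g u) :
    HasSum (fun n => (-1) ^ n * a n * a (n + 1)) (H (a 0)) := by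
  have mem_D := ha.mem hf hg ha0
  have summable_norm : Summable fun n => ‖a n‖ :=
    .of_nonneg_of_le (fun n => norm_nonneg _)
      (ha.norm_le_pow_mul hq0 (fun n => hf_le _ (mem_D n)) fun n => hg_le _ (mem_D n))
      ((summable_geometric_of_lt_one hq0 hq1).mul_right _)
  have summable_H : Summable fun n => H (a n) :=
    .of_norm_bounded (summable_norm.mul_left C) fun n => hH _ (mem_D n)
  have summable_G : Summable fun n => G (a n) :=
    .of_norm_bounded (summable_norm.mul_left C) fun n => hG _ (mem_D n)
  obtain ⟨sumH, hH_even⟩ : Summable fun k => H (a (2 * k)) :=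
    summable_H.comp_injective (i := fun k => 2 * k) fun _ _ hk => by simpa using hk
  obtain ⟨sumG, hG_odd⟩ : Summable fun k => G (a (2 * k + 1)) :=
    summable_G.comp_injective (i := fun k => 2 * k + 1) fun _ _ hk => by simpa using hk
  have hH_even_tail : HasSum (fun k => H (a (2 * k + 2))) (sumH - H (a 0)) := by
    simpa [mul_add] using (hasSum_nat_add_iff' 1).2 hH_even
  have even_terms : HasSum (fun k => (-1) ^ (2 * k) * a (2 * k) * a (2 * k + 1)) (sumH + sumG) :=
    (hH_even.add hG_odd).congr_fun fun k => by simp [(ha k).1, hHG _ (mem_D _)]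
  have odd_terms : HasSum (fun k => (-1) ^ (2 * k + 1) * a (2 * k + 1) * a (2 * k + 1 + 1))
      (-(sumG + (sumH - H (a 0)))) :=
    (hG_odd.add hH_even_tail).neg.congr_fun fun k => by
      simp [(ha k).2, hGH _ (mem_D _), pow_succ]
  have sum_eq : sumH + sumG + -(sumG + (sumH - H (a 0))) = H (a 0) := by ring
  rw [← sum_eq]
  exact HasSum.even_add_odd (f := fun n => (-1) ^ n * a n * a (n + 1)) even_terms odd_terms

end IsAlternatingOrbit

/-- The root of `a x² - b x + c` that vanishes with `c` when `0 < b`; it is `0` for `a = 0`, where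
the division is by zero. -/
noncomputable def smallRoot (a b c : ℝ) : ℝ := (b - √(b ^ 2 - 4 * a * c)) / (2 * a)

section smallRoot

variable {a b c : ℝ}

theorem smallRoot_isRoot (ha : a ≠ 0) (hd : 0 ≤ b ^ 2 - 4 * a * c) :
    a * smallRoot a b c ^ 2 - b * smallRoot a b c + c = 0 := by
  have hdiscrim : discrim a (-b) c = √(b ^ 2 - 4 * a * c) * √(b ^ 2 - 4 * a * c) := by
    rw [Real.mul_self_sqrt hd, discrim, neg_sq]
  have hroot := (quadratic_eq_zero_iff ha hdiscrim (smallRoot a b c)).2 <| Or.inr <| by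
    rw [smallRoot, neg_neg]
  linear_combination hroot

-- The other root is `(b + √…) / (2 * a)` and the product of the two roots is `c / a`.
theorem smallRoot_mul_add_sqrt (ha : a ≠ 0) (hd : 0 ≤ b ^ 2 - 4 * a * c) :
    smallRoot a b c * (b + √(b ^ 2 - 4 * a * c)) = 2 * c := by
  rw [smallRoot]
  field_simp
  linear_combination -Real.sq_sqrt hd

theorem abs_smallRoot_le (ha : a ≠ 0) (hb : 0 < b) (hd : 0 ≤ b ^ 2 - 4 * a * c) :
    |smallRoot a b c| ≤ 2 * |c| / b := by
  rw [le_div_iff₀ hb]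
  calc |smallRoot a b c| * b
      ≤ |smallRoot a b c| * |b + √(b ^ 2 - 4 * a * c)| := by
        gcongr
        exact (le_add_of_nonneg_right (Real.sqrt_nonneg _)).trans (le_abs_self _)
    _ = 2 * |c| := by rw [← abs_mul, smallRoot_mul_add_sqrt ha hd, abs_mul, abs_two]

end smallRoot

/-- The small root `X₊(u)` in `x` of `kernelT t x u`. -/
noncomputable def xRoot (t u : ℝ) : ℝ :=
  u * ((1 - t * u) - √((1 - t * u) ^ 2 - 4 * t ^ 2)) / (2 * t)

/-- The small root `Y₊(u)` in `y` of `kernelT t u y`; for `u = -1`, where the kernel is linear in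
`y`, the division by zero makes it `0`, which is not a root. -/
noncomputable def yRoot (t u : ℝ) : ℝ :=
  u * (1 - √(1 - 4 * t ^ 2 * (1 + u))) / (2 * t * (1 + u))

section kernelRoots

variable {t u : ℝ}

theorem xRoot_eq_mul_smallRoot (t u : ℝ) : xRoot t u = u * smallRoot t (1 - t * u) t := by
  rw [xRoot, smallRoot, mul_div_assoc]
  ring_nf

theorem yRoot_eq_mul_smallRoot (t u : ℝ) : yRoot t u = u * smallRoot (t * (1 + u)) 1 t := by
  rw [yRoot, smallRoot, mul_div_assoc]
  ring_nf

theorem mul_le_abs_of_abs_le_one (hu : |u| ≤ 1) : t * u ≤ |t| :=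
  calc t * u ≤ |t| * |u| := (le_abs_self _).trans_eq (abs_mul t u)
    _ ≤ |t| := mul_le_of_le_one_right (abs_nonneg t) hu

theorem xRoot_discrim_nonneg (ht : |t| < 1 / 3) (hu : |u| ≤ 1) :
    0 ≤ (1 - t * u) ^ 2 - 4 * t * t := by
  have h : t * u ≤ |t| := mul_le_abs_of_abs_le_one hu
  nlinarith [sq_abs t, abs_nonneg t]

theorem yRoot_discrim_nonneg (ht : |t| < 1 / 3) (hu : u ≤ 1) :
    0 ≤ (1 : ℝ) ^ 2 - 4 * (t * (1 + u)) * t := by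
  nlinarith [sq_abs t, abs_nonneg t, sq_nonneg t]

theorem abs_le_one_of_mem_Ioc (hu : u ∈ Set.Ioc (-1) 1) : |u| ≤ 1 := abs_le.2 ⟨hu.1.le, hu.2⟩

theorem mul_one_add_ne_zero (ht0 : t ≠ 0) (hu : u ∈ Set.Ioc (-1) 1) : t * (1 + u) ≠ 0 :=
  mul_ne_zero ht0 (by linarith [hu.1])

theorem kernelT_xRoot (ht0 : t ≠ 0) (ht : |t| < 1 / 3) (hu : |u| ≤ 1) :
    kernelT t (xRoot t u) u = 0 := by
  rw [kernelT, xRoot_eq_mul_smallRoot]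
  linear_combination -u ^ 2 * smallRoot_isRoot ht0 (xRoot_discrim_nonneg ht hu)

theorem kernelT_yRoot (ht0 : t ≠ 0) (ht : |t| < 1 / 3) (hu : u ∈ Set.Ioc (-1) 1) :
    kernelT t u (yRoot t u) = 0 := by
  rw [kernelT, yRoot_eq_mul_smallRoot]
  linear_combination
    -u ^ 2 * smallRoot_isRoot (mul_one_add_ne_zero ht0 hu)
      (yRoot_discrim_nonneg ht hu.2)

theorem abs_xRoot_le (ht0 : t ≠ 0) (ht : |t| < 1 / 3) (hu : |u| ≤ 1) :
    |xRoot t u| ≤ 2 * |t| / (1 - |t|) * |u| := by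
  have htu : t * u ≤ |t| := mul_le_abs_of_abs_le_one hu
  rw [xRoot_eq_mul_smallRoot, abs_mul, mul_comm]
  gcongr
  calc |smallRoot t (1 - t * u) t|
      ≤ 2 * |t| / (1 - t * u) :=
        abs_smallRoot_le ht0 (by linarith) (xRoot_discrim_nonneg ht hu)
    _ ≤ 2 * |t| / (1 - |t|) := by gcongr; linarith

theorem abs_yRoot_le (ht0 : t ≠ 0) (ht : |t| < 1 / 3) (hu : u ∈ Set.Ioc (-1) 1) :
    |yRoot t u| ≤ 2 * |t| / (1 - |t|) * |u| := by
  rw [yRoot_eq_mul_smallRoot, abs_mul, mul_comm]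
  gcongr
  calc |smallRoot (t * (1 + u)) 1 t|
      ≤ 2 * |t| / 1 :=
        abs_smallRoot_le (mul_one_add_ne_zero ht0 hu) one_pos
          (yRoot_discrim_nonneg ht hu.2)
    _ ≤ 2 * |t| / (1 - |t|) := by gcongr <;> linarith [abs_nonneg t]

theorem two_mul_abs_div_nonneg (ht : |t| < 1 / 3) : 0 ≤ 2 * |t| / (1 - |t|) :=
  div_nonneg (by positivity) (by linarith)

theorem two_mul_abs_div_lt_one (ht : |t| < 1 / 3) : 2 * |t| / (1 - |t|) < 1 := by
  rw [div_lt_one] <;> linarith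

theorem mem_Ioc_of_abs_le_mul {q v : ℝ} (hq0 : 0 ≤ q) (hq1 : q < 1) (hu : |u| ≤ 1)
    (hv : |v| ≤ q * |u|) : v ∈ Set.Ioc (-1) 1 := by
  have hv1 : |v| < 1 := hv.trans_lt ((mul_le_of_le_one_right hq0 hu).trans_lt hq1)
  exact ⟨neg_lt_of_abs_lt hv1, (lt_of_abs_lt hv1).le⟩

theorem mapsTo_xRoot (ht0 : t ≠ 0) (ht : |t| < 1 / 3) :
    Set.MapsTo (xRoot t) (Set.Ioc (-1) 1) (Set.Ioc (-1) 1) := fun _ hu =>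
  have hu1 := abs_le_one_of_mem_Ioc hu
  mem_Ioc_of_abs_le_mul (two_mul_abs_div_nonneg ht) (two_mul_abs_div_lt_one ht) hu1
    (abs_xRoot_le ht0 ht hu1)

theorem mapsTo_yRoot (ht0 : t ≠ 0) (ht : |t| < 1 / 3) :
    Set.MapsTo (yRoot t) (Set.Ioc (-1) 1) (Set.Ioc (-1) 1) := fun _ hu =>
  mem_Ioc_of_abs_le_mul (two_mul_abs_div_nonneg ht) (two_mul_abs_div_lt_one ht)
    (abs_le_one_of_mem_Ioc hu) (abs_yRoot_le ht0 ht hu)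

theorem xBoundary_xRoot_add_yBoundary (ht0 : t ≠ 0) (ht : |t| < 1 / 3)
    (hu : u ∈ Set.Ioc (-1) 1) : xBoundary t (xRoot t u) + yBoundary t u = xRoot t u * u :=
  have hu1 := abs_le_one_of_mem_Ioc hu
  xBoundary_add_yBoundary ht (abs_le_one_of_mem_Ioc (mapsTo_xRoot ht0 ht hu)) hu1
    (kernelT_xRoot ht0 ht hu1)

theorem xBoundary_add_yBoundary_yRoot (ht0 : t ≠ 0) (ht : |t| < 1 / 3)
    (hu : u ∈ Set.Ioc (-1) 1) : xBoundary t u + yBoundary t (yRoot t u) = u * yRoot t u :=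
  xBoundary_add_yBoundary ht (abs_le_one_of_mem_Ioc hu)
    (abs_le_one_of_mem_Ioc (mapsTo_yRoot ht0 ht hu)) (kernelT_yRoot ht0 ht hu)

theorem hasSum_alternating_yRoot_xRoot {a : ℕ → ℝ} (ht0 : t ≠ 0) (ht : |t| < 1 / 3)
    (ha : IsAlternatingOrbit (yRoot t) (xRoot t) a) (ha0 : a 0 ∈ Set.Ioc (-1) 1) :
    HasSum (fun n => (-1) ^ n * a n * a (n + 1)) (xBoundary t (a 0)) :=
  ha.hasSum_alternating_mul_succ ha0 (two_mul_abs_div_nonneg ht) (two_mul_abs_div_lt_one ht)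
    (mapsTo_yRoot ht0 ht) (fun _ hu => abs_yRoot_le ht0 ht hu)
    (mapsTo_xRoot ht0 ht) (fun _ hu => abs_xRoot_le ht0 ht (abs_le_one_of_mem_Ioc hu))
    (fun _ hu => norm_xBoundary_le ht (abs_le_one_of_mem_Ioc hu))
    (fun _ hu => norm_yBoundary_le ht (abs_le_one_of_mem_Ioc hu))
    (fun _ hu => xBoundary_add_yBoundary_yRoot ht0 ht hu)
    fun u hu => by rw [add_comm, mul_comm u, xBoundary_xRoot_add_yBoundary ht0 ht hu]

theorem hasSum_alternating_xRoot_yRoot {a : ℕ → ℝ} (ht0 : t ≠ 0) (ht : |t| < 1 / 3)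
    (ha : IsAlternatingOrbit (xRoot t) (yRoot t) a) (ha0 : a 0 ∈ Set.Ioc (-1) 1) :
    HasSum (fun n => (-1) ^ n * a n * a (n + 1)) (yBoundary t (a 0)) :=
  ha.hasSum_alternating_mul_succ ha0 (two_mul_abs_div_nonneg ht) (two_mul_abs_div_lt_one ht)
    (mapsTo_xRoot ht0 ht) (fun _ hu => abs_xRoot_le ht0 ht (abs_le_one_of_mem_Ioc hu))
    (mapsTo_yRoot ht0 ht) (fun _ hu => abs_yRoot_le ht0 ht hu)
    (fun _ hu => norm_yBoundary_le ht (abs_le_one_of_mem_Ioc hu))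
    (fun _ hu => norm_xBoundary_le ht (abs_le_one_of_mem_Ioc hu))
    (fun u hu => by rw [add_comm, mul_comm u, xBoundary_xRoot_add_yBoundary ht0 ht hu])
    fun _ hu => xBoundary_add_yBoundary_yRoot ht0 ht hu

end kernelRoots

theorem hasSum_numWalksT {𝕜 : Type*} [NormedField 𝕜] [CompleteSpace 𝕜] {t : 𝕜}
    (ht : ‖t‖ < 1 / 3) : HasSum (fun n => (numWalksT n : 𝕜) * t ^ n) (walkGF stepsT t 1 1) := by
  simpa only [walkPoly_one_one, numWalksT] using
    hasSum_walkGF (ncard_stepsT_mul_norm_lt_one ht) norm_one.le norm_one.le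

theorem walkGF_stepsT_one_one {𝕜 : Type*} [NormedField 𝕜] [CompleteSpace 𝕜] {t : 𝕜}
    (ht : ‖t‖ < 1 / 3) :
    walkGF stepsT t 1 1 * (1 - 3 * t) = 1 - xBoundary t 1 - yBoundary t 1 := by
  have h := kernelT_mul_walkGF ht (x := 1) (y := 1) norm_one.le norm_one.le
  rw [kernelT] at h
  linear_combination h

theorem stmt_17_general (t : ℝ) (ht0 : t ≠ 0) (ht : |t| < 1 / 3)
    (Xp Yp : ℝ → ℝ)
    (hXp : ∀ u, Xp u = u * ((1 - t * u) - Real.sqrt ((1 - t * u) ^ 2 - 4 * t ^ 2)) / (2 * t))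
    (hYp : ∀ u, Yp u = u * (1 - Real.sqrt (1 - 4 * t ^ 2 * (1 + u))) / (2 * t * (1 + u)))
    (A B : ℕ → ℝ)
    (hA0 : A 0 = 1)
    (hA : ∀ k : ℕ, A (2 * k + 1) = Yp (A (2 * k)) ∧ A (2 * k + 2) = Xp (A (2 * k + 1)))
    (hB0 : B 0 = 1)
    (hB : ∀ k : ℕ, B (2 * k + 1) = Xp (B (2 * k)) ∧ B (2 * k + 2) = Yp (B (2 * k + 1))) :
    Summable (fun n : ℕ => (numWalksT n : ℝ) * t ^ n) ∧
    Summable (fun n : ℕ => (-1 : ℝ) ^ n * A n * A (n + 1)) ∧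
    Summable (fun n : ℕ => (-1 : ℝ) ^ n * B n * B (n + 1)) ∧
    (∑' n : ℕ, (numWalksT n : ℝ) * t ^ n)
      = (1 - (∑' n : ℕ, (-1 : ℝ) ^ n * A n * A (n + 1))
           - (∑' n : ℕ, (-1 : ℝ) ^ n * B n * B (n + 1))) / (1 - 3 * t) := by
  obtain rfl : Xp = xRoot t := funext hXp
  obtain rfl : Yp = yRoot t := funext hYp
  have one_mem : (1 : ℝ) ∈ Set.Ioc (-1) 1 := by norm_num
  have walks := hasSum_numWalksT (t := t) ht
  have sumA := hasSum_alternating_yRoot_xRoot ht0 ht hA (hA0 ▸ one_mem)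
  have sumB := hasSum_alternating_xRoot_yRoot ht0 ht hB (hB0 ▸ one_mem)
  refine ⟨walks.summable, sumA.summable, sumB.summable, ?_⟩
  rw [walks.tsum_eq, sumA.tsum_eq, sumB.tsum_eq, hA0, hB0,
    eq_div_iff (by linarith [lt_of_abs_lt ht]), walkGF_stepsT_one_one ht]

theorem stmt_17 (t : ℝ) (ht : 0 < t) (ht3 : t < 1 / 3)
    (Xp Yp : ℝ → ℝ)
    (hXp : ∀ u, Xp u = u * ((1 - t * u) - Real.sqrt ((1 - t * u) ^ 2 - 4 * t ^ 2)) / (2 * t))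
    (hYp : ∀ u, Yp u = u * (1 - Real.sqrt (1 - 4 * t ^ 2 * (1 + u))) / (2 * t * (1 + u)))
    (A B : ℕ → ℝ)
    (hA0 : A 0 = 1)
    (hA : ∀ k : ℕ, A (2 * k + 1) = Yp (A (2 * k)) ∧ A (2 * k + 2) = Xp (A (2 * k + 1)))
    (hB0 : B 0 = 1)
    (hB : ∀ k : ℕ, B (2 * k + 1) = Xp (B (2 * k)) ∧ B (2 * k + 2) = Yp (B (2 * k + 1))) :
    Summable (fun n : ℕ => (numWalksT n : ℝ) * t ^ n) ∧
    Summable (fun n : ℕ => (-1 : ℝ) ^ n * A n * A (n + 1)) ∧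
    Summable (fun n : ℕ => (-1 : ℝ) ^ n * B n * B (n + 1)) ∧
    (∑' n : ℕ, (numWalksT n : ℝ) * t ^ n)
      = (1 - (∑' n : ℕ, (-1 : ℝ) ^ n * A n * A (n + 1))
           - (∑' n : ℕ, (-1 : ℝ) ^ n * B n * B (n + 1))) / (1 - 3 * t) :=
  stmt_17_general t ht.ne' (by rwa [abs_of_pos ht]) Xp Yp hXp hYp A B hA0 hA hB0 hB
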